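/- The function ε : ℕ → ZMod 2 defined by ε(r) = 1 if r is odd and ε(r) = 0 if r is even satisfies the Adem constraints. (Hence the corresponding rule Q^{2r}u = u^{r+1} for r odd, Q^{2r}u = 0 for r even, defines a valid Dyer–Lashof structure on F₂[u].) -/

import Mathlib

/-!
Write `V = 1 + X + X² + ⋯ = (1 - X)⁻¹` in `𝔽₂⟦X⟧`. The generating function of `ε` is `X * V ^ 2`,
since `ε n = n` in `𝔽₂`, so `E ε (s + 1) d` is the coefficient of `X ^ d` in
`X ^ (s + 1) * V ^ (2 * s + 2)`, namely `C(s + d, 2 * s + 1)` (`E_odd`). The Adem constraint becomes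
`ε s * C(r + s, 2 * s + 1) = ∑ i, C(i - s - 1, 2 * i - r) * ε i * C(r + s, 2 * i + 1)`.

By Lucas' theorem every term vanishes unless `s` is odd, `r` is even and `r + s = 4 * m + 3`. With
`s = 2 * a + 1` and `i = 2 * (m - j) + 1`, Lucas reduces the constraint to
`∑ j, C(m, j) * C(m - j - a - 1, a - 2 * j) = C(m, a)` in `𝔽₂` (`core`). The left side is the
coefficient of `X ^ a` in `(X ^ 2 + (1 - X)) ^ m * V ^ (a + 1)`. In characteristic two,
`X ^ 2 + (1 - X) = X * (1 - X) + 1`; expanding this other binomial, the `k`-th summand contributes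
`C(m, k)` times a central binomial coefficient `C(2 * (a - k), a - k)`, which is even unless `k = a`.
-/

/-- `E ε s d` is the sum over all `s`-tuples of naturals summing to `d` of the
products of the values of `ε`, in `ZMod 2`. -/
def E (ε : ℕ → ZMod 2) (s d : ℕ) : ZMod 2 :=
  ∑ f ∈ Finset.Nat.antidiagonalTuple s d, ∏ j, ε (f j)

/-- `ε` satisfies the Adem constraints encoding the Adem relations among the
Dyer-Lashof operations on `F₂[u]` with `Q^{2r} u = ε r • u^{r+1}`. -/
def AdemConstraints (ε : ℕ → ZMod 2) : Prop :=
  ε 0 = 0 ∧ ε 1 = 1 ∧ ∀ s r : ℕ, r > 2 * s →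
    ε s * E ε (s + 1) r =
      ∑ i ∈ (Finset.Icc (s + 1) (r - s - 1)).filter (fun i => r ≤ 2 * i),
        ((Nat.choose (i - s - 1) (2 * i - r) : ZMod 2) * ε i * E ε (i + 1) (r + s - i))

open PowerSeries in
theorem E_eq_coeff (ε : ℕ → ZMod 2) (s d : ℕ) : E ε s d = coeff d ((mk ε) ^ s) := by
  have h : (mk ε) ^ s = ∏ _j : Fin s, mk ε := by simp
  rw [h, coeff_prod, E]
  refine Finset.sum_bij' (fun f _ => Finsupp.equivFunOnFinite.symm f) (fun l _ => ⇑l) ?_ ?_ ?_ ?_ ?_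
  · intro f hf
    simpa [Finset.mem_finsuppAntidiag, Finset.Nat.mem_antidiagonalTuple] using hf
  · intro f hf
    simpa [Finset.mem_finsuppAntidiag, Finset.Nat.mem_antidiagonalTuple] using hf
  · intro f hf
    rfl
  · intro l hl
    ext
    simp
  · intro f hf
    simp

theorem choose_odd_odd (n k : ℕ) :
    (Nat.choose (2 * n + 1) (2 * k + 1) : ZMod 2) = Nat.choose n k := by
  have h := Choose.choose_modEq_choose_mod_mul_choose_div_nat (p := 2)
    (n := 2 * n + 1) (k := 2 * k + 1)
  rw [show (2 * n + 1) % 2 = 1 by omega, show (2 * k + 1) % 2 = 1 by omega,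
    show (2 * n + 1) / 2 = n by omega, show (2 * k + 1) / 2 = k by omega] at h
  simpa using (ZMod.natCast_eq_natCast_iff _ _ _).2 h

theorem choose_odd_even (n k : ℕ) :
    (Nat.choose (2 * n + 1) (2 * k) : ZMod 2) = Nat.choose n k := by
  have h := Choose.choose_modEq_choose_mod_mul_choose_div_nat (p := 2)
    (n := 2 * n + 1) (k := 2 * k)
  rw [show (2 * n + 1) % 2 = 1 by omega, show (2 * k) % 2 = 0 by omega,
    show (2 * n + 1) / 2 = n by omega, show (2 * k) / 2 = k by omega] at h
  simpa using (ZMod.natCast_eq_natCast_iff _ _ _).2 h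

theorem choose_even_odd {n k : ℕ} (hn : Even n) (hk : Odd k) : (Nat.choose n k : ZMod 2) = 0 := by
  have h := Choose.choose_modEq_choose_mod_mul_choose_div_nat (p := 2) (n := n) (k := k)
  rw [Nat.even_iff.1 hn, Nat.odd_iff.1 hk] at h
  simpa using (ZMod.natCast_eq_natCast_iff _ _ _).2 h

open PowerSeries in
theorem mk_odd_eq :
    (mk (fun r => if Odd r then 1 else 0) : (ZMod 2)⟦X⟧) = X * (mk 1) ^ 2 := by
  rw [mk_one_pow_eq_mk_choose_add (ZMod 2) 1]
  ext n
  cases n with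
  | zero => simp
  | succ n =>
    rw [coeff_succ_X_mul]
    simp only [coeff_mk, Nat.choose_one_right]
    split_ifs with h
    · rw [add_comm 1 n]; exact ((ZMod.natCast_eq_one_iff_odd).2 h).symm
    · rw [add_comm 1 n]; exact ((ZMod.natCast_eq_zero_iff_even).2 (Nat.not_odd_iff_even.1 h)).symm

open PowerSeries in
/-- Holds for all `d`: when `d ≤ s` both sides are zero. -/
theorem E_odd (s d : ℕ) :
    E (fun r => if Odd r then 1 else 0) (s + 1) d = (Nat.choose (s + d) (2 * s + 1) : ZMod 2) := by
  rw [E_eq_coeff, mk_odd_eq, mul_pow, ← pow_mul, coeff_X_pow_mul',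
    show 2 * (s + 1) = (2 * s + 1) + 1 by ring, mk_one_pow_eq_mk_choose_add]
  split_ifs with h
  · rw [coeff_mk]
    congr 2
    omega
  · rw [Nat.choose_eq_zero_of_lt (by omega)]
    simp

open PowerSeries in
theorem two_eq_zero_powerSeries : (2 : (ZMod 2)⟦X⟧) = 0 := by
  have h : C (R := ZMod 2) 2 = C 0 := congrArg _ rfl
  rwa [map_ofNat, map_zero] at h

open PowerSeries in
theorem coeff_one_sub_X_pow (n k : ℕ) :
    coeff k ((1 - X : (ZMod 2)⟦X⟧) ^ n) = (Nat.choose n k : ZMod 2) := by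
  have h2 : (1 - X : (ZMod 2)⟦X⟧) = ((1 + Polynomial.X : Polynomial (ZMod 2)) : (ZMod 2)⟦X⟧) := by
    push_cast
    linear_combination (-X) * two_eq_zero_powerSeries
  rw [h2, ← Polynomial.coe_pow, Polynomial.coeff_coe, Polynomial.coeff_one_add_X_pow]

open PowerSeries in
/-- The hypothesis makes `m - j - a - 1` an honest subtraction whenever `2 * j ≤ a`. -/
theorem core (m a : ℕ) (h : 3 * a + 1 ≤ 2 * m) :
    ∑ j ∈ Finset.range (m + 1),
      (if 2 * j ≤ a then (Nat.choose (m - j - a - 1) (a - 2 * j) : ZMod 2) else 0) *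
        Nat.choose m j = Nat.choose m a := by
  set V : (ZMod 2)⟦X⟧ := mk 1 with hV
  have hVU : V * (1 - X) = 1 := mk_one_mul_one_sub_eq_one _
  have hVUp (n : ℕ) : V ^ n * (1 - X) ^ n = 1 := by rw [← mul_pow, hVU, one_pow]
  have key : coeff a ((X ^ 2 + (1 - X)) ^ m * V ^ (a + 1)) =
      coeff a ((X * (1 - X) + 1) ^ m * V ^ (a + 1)) := by
    congr 3
    linear_combination (X ^ 2 - X) * two_eq_zero_powerSeries
  rw [add_pow, add_pow, Finset.sum_mul, Finset.sum_mul, map_sum, map_sum] at key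
  have left : ∀ j ∈ Finset.range (m + 1),
      coeff a ((X ^ 2) ^ j * (1 - X) ^ (m - j) * (m.choose j : (ZMod 2)⟦X⟧) * V ^ (a + 1)) =
      (if 2 * j ≤ a then (Nat.choose (m - j - a - 1) (a - 2 * j) : ZMod 2) else 0) *
        Nat.choose m j := by
    intro j hj
    have e : (X ^ 2) ^ j * (1 - X) ^ (m - j) * (m.choose j : (ZMod 2)⟦X⟧) * V ^ (a + 1) =
        X ^ (2 * j) * ((1 - X) ^ (m - j) * V ^ (a + 1)) * C (m.choose j : ZMod 2) := by
      rw [map_natCast]; ring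
    rw [e, coeff_mul_C, coeff_X_pow_mul']
    split_ifs with hja
    · rw [show m - j = (m - j - a - 1) + (a + 1) by omega, pow_add, mul_assoc, mul_comm _ (V ^ _),
        hVUp, mul_one, coeff_one_sub_X_pow]
      congr 3
      omega
    · rfl
  have right : ∀ k ∈ Finset.range (m + 1),
      coeff a ((X * (1 - X)) ^ k * 1 ^ (m - k) * (m.choose k : (ZMod 2)⟦X⟧) * V ^ (a + 1)) =
      if k = a then (m.choose a : ZMod 2) else 0 := by
    intro k hk
    have e : (X * (1 - X)) ^ k * 1 ^ (m - k) * (m.choose k : (ZMod 2)⟦X⟧) * V ^ (a + 1) =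
        X ^ k * ((1 - X) ^ k * V ^ (a + 1)) * C (m.choose k : ZMod 2) := by
      rw [map_natCast, one_pow, mul_pow]; ring
    rw [e, coeff_mul_C, coeff_X_pow_mul']
    split_ifs with hka h1 h1
    · subst h1
      rw [pow_succ, ← mul_assoc, mul_comm (_ ^ _), hVUp]
      simp [hV]
    · obtain ⟨t, rfl⟩ := Nat.exists_eq_add_of_le hka
      rw [add_assoc, pow_add, ← mul_assoc, mul_comm ((1 - X) ^ k), hVUp, one_mul, hV,
        mk_one_pow_eq_mk_choose_add, coeff_mk, Nat.add_sub_cancel_left, ← two_mul]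
      have := Nat.two_dvd_centralBinom_of_one_le (n := t) (by omega)
      rw [Nat.centralBinom, ← ZMod.natCast_eq_zero_iff] at this
      rw [this, zero_mul]
    · omega
    · simp
  rw [Finset.sum_congr rfl left, Finset.sum_congr rfl right] at key
  rw [key, Finset.sum_ite_eq' , if_pos (Finset.mem_range.2 (by omega))]

theorem stmt_7 :
    AdemConstraints (fun r => if Odd r then 1 else 0) := by
  refine ⟨by simp, by simp, fun s r hr => ?_⟩
  have hE : ∀ i ∈ (Finset.Icc (s + 1) (r - s - 1)).filter (fun i => r ≤ 2 * i),
      ((Nat.choose (i - s - 1) (2 * i - r) : ZMod 2) * (if Odd i then 1 else 0) *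
        E (fun r => if Odd r then 1 else 0) (i + 1) (r + s - i)) =
      (Nat.choose (i - s - 1) (2 * i - r) : ZMod 2) * (if Odd i then 1 else 0) *
        Nat.choose (r + s) (2 * i + 1) := by
    intro i hi
    simp only [Finset.mem_filter, Finset.mem_Icc] at hi
    rw [E_odd, show i + (r + s - i) = r + s by omega]
  simp only
  rw [Finset.sum_congr rfl hE, E_odd, add_comm s r]
  rcases Nat.even_or_odd (r + s) with hn | hn
  · rw [choose_even_odd hn ⟨s, rfl⟩, mul_zero]
    refine (Finset.sum_eq_zero fun i _ => ?_).symm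
    rw [choose_even_odd hn ⟨i, rfl⟩, mul_zero]
  rcases Nat.even_or_odd s with hs | hs
  · rw [if_neg (Nat.not_odd_iff_even.2 hs), zero_mul]
    refine (Finset.sum_eq_zero fun i hi => ?_).symm
    simp only [Finset.mem_filter, Finset.mem_Icc] at hi
    split_ifs with hio
    · rw [choose_even_odd (n := i - s - 1), zero_mul, zero_mul] <;> grind
    · simp
  obtain ⟨n, hn⟩ := hn
  obtain ⟨a, rfl⟩ := hs
  rw [if_pos ⟨a, rfl⟩, one_mul, hn]
  simp only [choose_odd_odd]
  rcases Nat.even_or_odd n with hne | ⟨m, rfl⟩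
  · rw [choose_even_odd hne ⟨a, rfl⟩]
    refine (Finset.sum_eq_zero fun i hi => ?_).symm
    split_ifs with hio
    · rw [choose_even_odd hne hio, mul_zero]
    · simp
  rw [choose_odd_odd, ← core m a (by omega)]
  -- Only odd `i ≤ 2 * m + 1` contribute, through `i = 2 * (m - j) + 1`; conversely, the `j` whose
  -- image exceeds `r - s - 1` have a vanishing binomial coefficient and are discarded here.
  rw [← Finset.sum_filter_of_ne (s := Finset.range (m + 1))
    (p := fun j => 2 * j ≤ a ∧ a - 2 * j ≤ m - j - a - 1)]
  · refine Finset.sum_of_injOn (fun j => 2 * (m - j) + 1) ?_ ?_ ?_ ?_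
    · intro x hx y hy hxy
      simp at hx hy hxy
      omega
    · intro x hx
      simp at hx ⊢
      omega
    · intro i hi hi2
      simp only [Finset.mem_filter, Finset.mem_Icc] at hi
      split_ifs with hio
      · obtain ⟨c, rfl⟩ := hio
        by_cases hc : c ≤ m
        · exfalso
          apply hi2
          refine ⟨m - c, ?_, ?_⟩
          · simp
            omega
          · simp
            omega
        · rw [choose_odd_odd, Nat.choose_eq_zero_of_lt (n := m) (by omega)]
          simp
      · simp
    · intro j hj
      simp only [Finset.mem_filter, Finset.mem_range] at hj
      rw [if_pos hj.2.1, if_pos ⟨_, rfl⟩, mul_one, choose_odd_odd, Nat.choose_symm (by omega),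
        show 2 * (m - j) + 1 - (2 * a + 1) - 1 = 2 * (m - j - a - 1) + 1 by omega,
        show 2 * (2 * (m - j) + 1) - r = 2 * (a - 2 * j) by omega, choose_odd_even]
  · intro j hj hne
    by_contra hcon
    apply hne
    split_ifs with h2
    · rw [Nat.choose_eq_zero_of_lt (by omega)]
      simp
    · simp
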